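/- arXiv:2204.03136 — 2 statements merged into one kernel-verified Lean document; each statement's English description precedes it below -/
import Mathlib

section
/- Let m_1,…,m_q be square-free monomials, let i ≠ j be indices in {1,…,q}, let a = (a_1,…,a_q) and b = (b_1,…,b_q) belong to N^r_q, and let α be a non-negative integer with a_i ≥ α and b_j > r − α. Then the monomial m_i^{α}·m_j^{a_i−α}·m^{a′}, where a′ = a − a_i·e_i, divides lcm(m^a, m^b). -/
/-!
STATEMENT 9: Let m_1,…,m_q be square-free monomials, i ≠ j, a, b ∈ N^r_q, and α ≥ 0 with
a_i ≥ α and b_j > r − α. Then m_i^{α}·m_j^{a_i−α}·m^{a′}, where a′ = a − a_i·e_i,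
divides lcm(m^a, m^b).

Monomials are identified with their exponent vectors in ℕ^n; divisibility is the
componentwise order, and the lcm is the componentwise maximum. The exponent vector of
m_i^{α}·m_j^{a_i−α}·m^{a′} is `mpow m (Pi.single i α + Pi.single j (a i - α) +
Function.update a i 0)`.
-/

open Finset

/-- The exponent vector of `m^a = m_1^{a_1} ⋯ m_q^{a_q}`. -/
def mpow {n q : ℕ} (m : Fin q → Fin n → ℕ) (a : Fin q → ℕ) : Fin n → ℕ :=
  fun k => ∑ j, a j * m j k

theorem mpow_add {n q : ℕ} (m : Fin q → Fin n → ℕ) (a b : Fin q → ℕ) :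
    mpow m (a + b) = mpow m a + mpow m b := by
  funext k
  simp [mpow, add_mul, Finset.sum_add_distrib]

theorem mpow_single {n q : ℕ} (m : Fin q → Fin n → ℕ) (i : Fin q) (c : ℕ) (k : Fin n) :
    mpow m (Pi.single i c) k = c * m i k := by
  simp [mpow, Pi.single_apply]

theorem mul_le_mpow {n q : ℕ} (m : Fin q → Fin n → ℕ) (a : Fin q → ℕ) (j : Fin q) (k : Fin n) :
    a j * m j k ≤ mpow m a k :=
  Finset.single_le_sum (f := fun l => a l * m l k) (fun _ _ => Nat.zero_le _) (Finset.mem_univ j)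

theorem mpow_le_sum {n q : ℕ} (m : Fin q → Fin n → ℕ) (hsf : ∀ j k, m j k ≤ 1)
    (a : Fin q → ℕ) (k : Fin n) : mpow m a k ≤ ∑ l, a l :=
  Finset.sum_le_sum fun l _ => mul_le_of_le_one_right (Nat.zero_le _) (hsf l k)

theorem single_add_update_zero {q : ℕ} (a : Fin q → ℕ) (i : Fin q) :
    Pi.single i (a i) + Function.update a i 0 = a := by
  funext l
  by_cases h : l = i
  · subst h; simp
  · simp [h]

theorem modified_dvd_lcm {n q r : ℕ}
    (m : Fin q → Fin n → ℕ)
    (hsf : ∀ j k, m j k ≤ 1)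
    (i j : Fin q) (hij : i ≠ j)
    (a b : Fin q → ℕ) (ha : ∑ k, a k = r) (hb : ∑ k, b k = r)
    (α : ℕ) (hα : α ≤ a i) (hbj : r - α < b j) :
    mpow m (Pi.single i α + Pi.single j (a i - α) + Function.update a i 0) ≤
      fun k => max (mpow m a k) (mpow m b k) := by
  intro k
  have hsplit : mpow m a k = a i * m i k + mpow m (Function.update a i 0) k := by
    conv_lhs => rw [← single_add_update_zero a i, mpow_add, Pi.add_apply, mpow_single]
  have hsum : a i + ∑ l, Function.update a i 0 l = r := by
    have h : ∑ l, (Pi.single i (a i) + Function.update a i 0 : Fin q → ℕ) l = r := by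
      rw [single_add_update_zero, ha]
    simpa only [Pi.add_apply, Finset.sum_add_distrib, Fintype.sum_pi_single'] using h
  have hrest := mpow_le_sum m hsf (Function.update a i 0) k
  have hbk := mul_le_mpow m b j k
  rw [mpow_add, mpow_add, Pi.add_apply, Pi.add_apply, mpow_single, mpow_single]
  change _ ≤ max (mpow m a k) (mpow m b k)
  rw [le_max_iff]
  rcases Nat.le_one_iff_eq_zero_or_eq_one.mp (hsf i k) with hi | hi <;>
  rcases Nat.le_one_iff_eq_zero_or_eq_one.mp (hsf j k) with hj | hj <;>
  simp only [hi, hj, mul_zero, mul_one] at hsplit hbk ⊢ <;>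
  omega
end

section
/- Let r ≥ 2 and q ≥ 1 be integers, and set f = |F^r_1| and b = |B^r|. For every t ≥ 0, the number of faces of the simplicial complex L^r_q having exactly t+1 vertices equals q·(C(q−1,t) + C(f,t+1) − C(b,t+1)) + C(b,t+1), where C(n,k) denotes the binomial coefficient. -/
/-!
STATEMENT 14: Let r ≥ 2, q ≥ 1, f = |F^r_1|, b = |B^r|. For every t ≥ 0, the number of
faces of L^r_q with exactly t+1 vertices equals
q·(C(q−1,t) + C(f,t+1) − C(b,t+1)) + C(b,t+1) (an identity of integers).
-/

open Finset

/-- The set `B^r`, with `s = ⌈r/2⌉ = (r+1)/2`. -/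
def Bset (r q : ℕ) : Set (Fin q → ℕ) :=
  {a | (∑ k, a k = r) ∧ ∀ i, a i ≤ (r + 1) / 2}

/-- The set `F^r_i`, with `s = ⌈r/2⌉ = (r+1)/2`. -/
def Fset (r q : ℕ) (i : Fin q) : Set (Fin q → ℕ) :=
  {a | (∑ k, a k = r) ∧ a i ≤ max (r - 1) ((r + 1) / 2) ∧
    ∀ j, j ≠ i → a j ≤ (r + 1) / 2}

/-- The set `G^r_i`. -/
def Gset (r q : ℕ) (i : Fin q) : Set (Fin q → ℕ) :=
  {a | (∑ k, a k = r) ∧ r - 1 ≤ a i}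

/-- The faces of the simplicial complex `L^r_q`: all (finite) subsets of the sets
`F^r_1,…,F^r_q, G^r_1,…,G^r_q`. -/
def LFaces (r q : ℕ) : Set (Finset (Fin q → ℕ)) :=
  {σ | ∃ i : Fin q, (σ : Set (Fin q → ℕ)) ⊆ Fset r q i ∨ (σ : Set (Fin q → ℕ)) ⊆ Gset r q i}

theorem finite_sum_eq (r q : ℕ) : {a : Fin q → ℕ | ∑ k, a k = r}.Finite := by
  refine (Set.finite_Iic (fun _ : Fin q => r)).subset fun a ha k => ?_
  have ha : ∑ k, a k = r := ha
  exact ha ▸ Finset.single_le_sum (fun _ _ => Nat.zero_le _) (mem_univ k)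

theorem Bset_finite (r q : ℕ) : (Bset r q).Finite :=
  (finite_sum_eq r q).subset fun _ ha => ha.1

theorem Fset_finite (r q : ℕ) (i : Fin q) : (Fset r q i).Finite :=
  (finite_sum_eq r q).subset fun _ ha => ha.1

theorem Gset_finite (r q : ℕ) (i : Fin q) : (Gset r q i).Finite :=
  (finite_sum_eq r q).subset fun _ ha => ha.1

theorem Bset_subset_Fset (r q : ℕ) (i : Fin q) : Bset r q ⊆ Fset r q i :=
  fun _ ha => ⟨ha.1, le_max_of_le_right (ha.2 i), fun j _ => ha.2 j⟩

theorem Fset_inter_subset_Bset (r q : ℕ) {i j : Fin q} (hij : i ≠ j) :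
    Fset r q i ∩ Fset r q j ⊆ Bset r q := by
  rintro a ⟨hi, hj⟩
  refine ⟨hi.1, fun k => ?_⟩
  by_cases hk : k = i
  · exact hj.2.2 k (hk ▸ hij)
  · exact hi.2.2 k hk

theorem ncard_Fset_le (r q : ℕ) (i j : Fin q) : (Fset r q i).ncard ≤ (Fset r q j).ncard := by
  refine Set.ncard_le_ncard_of_injOn (fun a => a ∘ Equiv.swap i j) ?_ ?_ (Fset_finite r q j)
  · rintro a ⟨h1, h2, h3⟩
    refine ⟨?_, by simpa using h2, fun k hk => ?_⟩
    · rw [← h1]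
      exact Equiv.sum_comp (Equiv.swap i j) a
    · refine h3 _ fun h => hk ?_
      rw [← Equiv.swap_apply_left i j] at h
      simpa [Equiv.swap_apply_eq_iff] using h
  · intro a _ b _ h
    exact (Equiv.swap i j).surjective.injective_comp_right h

theorem ncard_Fset_eq (r q : ℕ) (i j : Fin q) : (Fset r q i).ncard = (Fset r q j).ncard :=
  (ncard_Fset_le r q i j).antisymm (ncard_Fset_le r q j i)

theorem eq_single_of_sum_eq_one {q : ℕ} {b : Fin q → ℕ} (hb : ∑ k, b k = 1) :
    ∃ j, b = Pi.single j 1 := by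
  obtain ⟨j, -, hj⟩ := Finset.exists_ne_zero_of_sum_ne_zero (hb ▸ one_ne_zero)
  refine ⟨j, funext fun k => ?_⟩
  have h := Finset.add_sum_erase univ b (mem_univ j)
  by_cases hk : k = j
  · subst hk
    simp only [Pi.single_eq_same]
    omega
  · have h' := Finset.single_le_sum (f := b) (fun _ _ => Nat.zero_le _)
      (mem_erase.2 ⟨hk, mem_univ k⟩)
    simp only [Pi.single_eq_of_ne hk]
    omega

theorem Gset_eq_range (r q : ℕ) (hr : 1 ≤ r) (i : Fin q) :
    Gset r q i = Set.range fun j => (Pi.single i (r - 1) + Pi.single j 1 : Fin q → ℕ) := by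
  ext a
  constructor
  · rintro ⟨h1, h2⟩
    have hle : (Pi.single i (r - 1) : Fin q → ℕ) ≤ a := fun k => by
      by_cases hk : k = i
      · subst hk
        simpa using h2
      · simp [Pi.single_eq_of_ne hk]
    obtain ⟨b, rfl⟩ := exists_add_of_le hle
    have hb : ∑ k, b k = 1 := by
      simp only [Pi.add_apply, sum_add_distrib, sum_pi_single', mem_univ, if_true] at h1
      omega
    obtain ⟨j, rfl⟩ := eq_single_of_sum_eq_one hb
    exact ⟨j, rfl⟩
  · rintro ⟨j, rfl⟩
    refine ⟨?_, by simp⟩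
    simp [sum_add_distrib]
    omega

theorem ncard_Gset (r q : ℕ) (hr : 1 ≤ r) (i : Fin q) : (Gset r q i).ncard = q := by
  rw [Gset_eq_range r q hr, ← Set.image_univ, Set.ncard_image_of_injective]
  · simp
  · intro j k h
    by_contra hjk
    have h' := congrFun (add_left_cancel h) j
    simp [Pi.single_eq_of_ne hjk] at h'

theorem single_mem_Gset (r q : ℕ) (i : Fin q) : (Pi.single i r : Fin q → ℕ) ∈ Gset r q i :=
  ⟨by simp, by simp⟩

theorem single_mem_Gset_iff (r q : ℕ) (hr : 2 ≤ r) (i j : Fin q) :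
    (Pi.single i r : Fin q → ℕ) ∈ Gset r q j ↔ i = j := by
  refine ⟨fun h => ?_, fun h => h ▸ single_mem_Gset r q i⟩
  by_contra hij
  have := h.2
  rw [Pi.single_eq_of_ne (Ne.symm hij)] at this
  omega

theorem single_notMem_Fset (r q : ℕ) (hr : 2 ≤ r) (i j : Fin q) :
    (Pi.single i r : Fin q → ℕ) ∉ Fset r q j := by
  rintro ⟨-, h2, h3⟩
  by_cases hij : i = j
  · subst hij
    rw [Pi.single_eq_same] at h2
    omega
  · have := h3 i hij
    rw [Pi.single_eq_same] at this
    omega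

theorem Gset_diff_subset_Fset (r q : ℕ) (hr : 2 ≤ r) (i : Fin q) {a : Fin q → ℕ}
    (ha : a ∈ Gset r q i) (hne : a ≠ Pi.single i r) : a ∈ Fset r q i := by
  rw [Gset_eq_range r q (by omega)] at ha
  obtain ⟨j, rfl⟩ := ha
  have hji : j ≠ i := by
    rintro rfl
    refine hne ?_
    simp only [← Pi.single_add]
    congr 1
    omega
  refine ⟨?_, by simp [Pi.single_eq_of_ne hji.symm], fun k hk => ?_⟩
  · simp [sum_add_distrib]
    omega
  · by_cases hkj : k = j
    · subst hkj
      simp [Pi.single_eq_of_ne hk]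
      omega
    · simp [Pi.single_eq_of_ne hk, Pi.single_eq_of_ne hkj]

theorem card_powersetCard_sdiff {α : Type*} [DecidableEq α] {A B : Finset α} (h : A ⊆ B) (n : ℕ) :
    (((B.powersetCard n) \ (A.powersetCard n)).card : ℤ) = B.card.choose n - A.card.choose n := by
  rw [card_sdiff_of_subset (powersetCard_mono h), card_powersetCard, card_powersetCard,
    Nat.cast_sub (Nat.choose_le_choose n (card_le_card h))]

/-- If each `F i` contains `B`, the `F i` pairwise meet inside `B`, and each `G i` consists of a
subset of `F i` and a point `x i` lying in no `F j` and no other `G j`, this counts the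
`n`-subsets of the sets `F i` and `G i`. -/
theorem card_powersetCard_union {α ι : Type*} [DecidableEq α] [Fintype ι] [DecidableEq ι]
    [Nonempty ι] (B : Finset α) (F G : ι → Finset α) (x : ι → α) (n : ℕ)
    (hBF : ∀ i, B ⊆ F i) (hFF : ∀ i j, i ≠ j → F i ∩ F j ⊆ B)
    (hGF : ∀ i, (G i).erase (x i) ⊆ F i)
    (hxF : ∀ i j, x i ∉ F j) (hxG : ∀ i j, x i ∈ G j → i = j) :
    (({σ : Finset α | (∃ i, σ ⊆ F i ∨ σ ⊆ G i) ∧ σ.card = n} : Set (Finset α)).ncard : ℤ) =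
      B.card.choose n + ∑ i, (((F i).card.choose n - B.card.choose n : ℤ) +
        ((G i).card.choose n - ((G i).erase (x i)).card.choose n)) := by
  have hmem : ∀ i σ, σ ∈ (G i).powersetCard n \ ((G i).erase (x i)).powersetCard n ↔
      σ ⊆ G i ∧ x i ∈ σ ∧ σ.card = n := by
    intro i σ
    simp only [mem_sdiff, mem_powersetCard, subset_erase]
    tauto
  have hset : ({σ : Finset α | (∃ i, σ ⊆ F i ∨ σ ⊆ G i) ∧ σ.card = n} : Set (Finset α)) =
      ↑(B.powersetCard n ∪ univ.biUnion fun i => ((F i).powersetCard n \ B.powersetCard n) ∪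
        ((G i).powersetCard n \ ((G i).erase (x i)).powersetCard n)) := by
    ext σ
    simp only [Set.mem_ofPred_eq, mem_coe, mem_union, mem_biUnion, mem_univ, true_and, hmem]
    simp only [mem_sdiff, mem_powersetCard]
    constructor
    · rintro ⟨⟨i, h | h⟩, hn⟩
      · by_cases hB : σ ⊆ B
        · exact Or.inl ⟨hB, hn⟩
        · exact Or.inr ⟨i, Or.inl ⟨⟨h, hn⟩, fun h => hB h.1⟩⟩
      · by_cases hx : x i ∈ σ
        · exact Or.inr ⟨i, Or.inr ⟨h, hx, hn⟩⟩
        · have hF : σ ⊆ F i := (subset_erase.2 ⟨h, hx⟩).trans (hGF i)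
          by_cases hB : σ ⊆ B
          · exact Or.inl ⟨hB, hn⟩
          · exact Or.inr ⟨i, Or.inl ⟨⟨hF, hn⟩, fun h => hB h.1⟩⟩
    · rintro (⟨h, hn⟩ | ⟨i, ⟨⟨h, hn⟩, -⟩ | ⟨h, -, hn⟩⟩)
      · exact ⟨⟨Classical.arbitrary ι, Or.inl (h.trans (hBF _))⟩, hn⟩
      · exact ⟨⟨i, Or.inl h⟩, hn⟩
      · exact ⟨⟨i, Or.inr h⟩, hn⟩
  rw [hset, Set.ncard_coe_finset, card_union_of_disjoint, card_biUnion]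
  · push_cast
    rw [card_powersetCard]
    congr 1
    refine sum_congr rfl fun i _ => ?_
    rw [card_union_of_disjoint, Nat.cast_add, card_powersetCard_sdiff (hBF i),
      card_powersetCard_sdiff (erase_subset _ _)]
    refine disjoint_left.2 fun σ h1 h2 => ?_
    exact hxF i i ((mem_powersetCard.1 (mem_sdiff.1 h1).1).1 ((hmem i σ).1 h2).2.1)
  · intro i _ j _ hij
    refine disjoint_left.2 fun σ h1 h2 => ?_
    simp only [mem_union, hmem] at h1 h2
    simp only [mem_sdiff, mem_powersetCard] at h1 h2
    rcases h1 with ⟨⟨h1, hn⟩, hB⟩ | ⟨h1, hx, -⟩ <;> rcases h2 with ⟨⟨h2, -⟩, -⟩ | ⟨h2, hx', -⟩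
    · exact hB ⟨(subset_inter h1 h2).trans (hFF i j hij), hn⟩
    · exact hxF j i (h1 hx')
    · exact hxF i j (h2 hx)
    · exact hij (hxG i j (h2 hx))
  · refine disjoint_left.2 fun σ h1 h2 => ?_
    simp only [mem_biUnion, mem_univ, true_and, mem_union, hmem] at h2
    obtain ⟨i, h2 | h2⟩ := h2
    · exact (mem_sdiff.1 h2).2 h1
    · exact hxF i i (hBF i ((mem_powersetCard.1 h1).1 h2.2.1))

theorem face_count_Lrq (r q : ℕ) (hr : 2 ≤ r) (hq : 1 ≤ q) (t : ℕ) :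
    (({σ | σ ∈ LFaces r q ∧ σ.card = t + 1} : Set (Finset (Fin q → ℕ))).ncard : ℤ) =
      (q : ℤ) * (((q - 1).choose t : ℤ) +
          (((Fset r q ⟨0, by omega⟩).ncard.choose (t + 1) : ℤ)) -
          (((Bset r q).ncard.choose (t + 1) : ℤ))) +
        (((Bset r q).ncard.choose (t + 1) : ℤ)) := by
  classical
  have : Nonempty (Fin q) := ⟨⟨0, by omega⟩⟩
  have key := card_powersetCard_union (Bset_finite r q).toFinset
    (fun i => (Fset_finite r q i).toFinset) (fun i => (Gset_finite r q i).toFinset)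
    (fun i => Pi.single i r) (t + 1)
    (fun i => by simpa using Bset_subset_Fset r q i)
    (fun i j hij a ha => by
      simp only [mem_inter, Set.Finite.mem_toFinset] at ha ⊢
      exact Fset_inter_subset_Bset r q hij ha)
    (fun i a ha => by
      simp only [mem_erase, Set.Finite.mem_toFinset] at ha ⊢
      exact Gset_diff_subset_Fset r q hr i ha.2 ha.1)
    (fun i j => by simpa using single_notMem_Fset r q hr i j)
    (fun i j h => by simpa [single_mem_Gset_iff r q hr] using h)
  have hG : ∀ i, (Gset_finite r q i).toFinset.card = q := fun i => by
    rw [← Set.ncard_eq_toFinset_card _ (Gset_finite r q i), ncard_Gset r q (by omega)]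
  have hF : ∀ i, (Fset_finite r q i).toFinset.card = (Fset r q ⟨0, by omega⟩).ncard := fun i => by
    rw [← Set.ncard_eq_toFinset_card _ (Fset_finite r q i), ncard_Fset_eq]
  have hG' : ∀ i, ((Gset_finite r q i).toFinset.erase (Pi.single i r)).card = q - 1 := fun i => by
    rw [card_erase_of_mem (by simpa using single_mem_Gset r q i), hG]
  simp only [hG, hF, hG', ← Set.ncard_eq_toFinset_card _ (Bset_finite r q), Set.Finite.subset_toFinset,
    sum_const, card_univ, Fintype.card_fin, nsmul_eq_mul] at key
  have hchoose : (q.choose (t + 1) : ℤ) = (q - 1).choose t + (q - 1).choose (t + 1) := by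
    obtain ⟨p, rfl⟩ := Nat.exists_eq_add_of_le' hq
    simp [Nat.choose_succ_succ]
  rw [hchoose] at key
  simp only [LFaces, Set.mem_ofPred_eq]
  rw [key]
  ring
end
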